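/- Let L be an even lattice of rank 2k with an automorphism of ℓ-power order (ℓ ≥ 5 prime) whose only fixed point on the discriminant group L*/L is 0. Then k is even, i.e. the rank of L is divisible by 4. -/

import Mathlib

/-- The dual lattice of a `ℤ`-lattice `L` in a rational quadratic space `(V, B)`:
all `y` with `B y x ∈ ℤ` for every `x ∈ L`. -/
def dualLattice (V : Type) [AddCommGroup V] [Module ℚ V]
    (B : V →ₗ[ℚ] V →ₗ[ℚ] ℚ) (L : Submodule ℤ V) : Submodule ℤ V where
  carrier := {y : V | ∀ x ∈ L, ∃ m : ℤ, B y x = (m : ℚ)}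
  zero_mem' := fun x _ => ⟨0, by simp⟩
  add_mem' := by
    intro a b ha hb x hx
    obtain ⟨m, hm⟩ := ha x hx
    obtain ⟨m', hm'⟩ := hb x hx
    exact ⟨m + m', by simp [hm, hm']⟩
  smul_mem' := by
    intro c y hy x hx
    obtain ⟨m, hm⟩ := hy x hx
    refine ⟨c * m, ?_⟩
    have : B (c • y) x = c • (B y x) := by
      rw [map_zsmul B c y]; rfl
    rw [this, hm, zsmul_eq_mul]
    push_cast
    ring

/-!
Let `N` be the odd order of the isometry `f`, and split `V = K ⊕ M` into the fixed space
`K = ker (1 - f)` and its orthogonal complement `M = range (1 - f)`. Write `disc` for Gram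
determinants modulo squares.

* An isometry of odd order is a square `s ^ 2`, and `(x, y) ↦ b x (s y) - b (s x) y` is an
  alternating pairing which composed with `s` is `b ∘ (1 - f)`. Over `ℚ` this gives
  `disc M = det (1 - f | M)`. On the discriminant group `L* / L`, where `1 - f` is injective, it
  gives a nondegenerate alternating pairing, so `[L* : L]`, which is `disc V`, is a square.
  Therefore `disc K * det (1 - f | M)` is a square.
* The characteristic polynomial of `f` on `M` is a product of cyclotomic polynomials, and evaluating
  these at `1` shows that `det (1 - f | M)` is an odd integer congruent to `dim M + 1` modulo `4`.
* Taking orbit sums, `N` kills `F* / F` for the even lattice `F = L ∩ K`, so the Gram determinant of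
  `F` is odd. Writing the Gram matrix as `U + Uᵀ` shows that it is then congruent to `1 - dim K`
  modulo `4`: it differs from the determinant of the alternating matrix `U - Uᵀ`, an odd square,
  by that factor.

An odd square is `1` modulo `4`, hence `(1 - dim K) * (1 + dim M) ≡ 1` modulo `4` with both
dimensions even.
-/

section Powers

variable {R M : Type*} [Ring R] [AddCommGroup M] [Module R M] {f : Module.End R M} {x : M}

theorem mem_ker_one_sub : x ∈ LinearMap.ker (1 - f) ↔ f x = x := by
  rw [LinearMap.mem_ker, LinearMap.sub_apply, Module.End.one_apply, sub_eq_zero, eq_comm]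

theorem pow_apply_eq_of_apply_eq (hx : f x = x) (n : ℕ) : (f ^ n) x = x := by
  rw [Module.End.pow_apply, Function.iterate_fixed hx]

theorem pow_apply_mem {S : Type*} [SetLike S M] {p : S} (hf : ∀ x ∈ p, f x ∈ p) (hx : x ∈ p)
    (n : ℕ) : (f ^ n) x ∈ p := by
  induction n with
  | zero => simpa
  | succ n ih => exact pow_succ' f n ▸ hf _ ih

theorem sum_pow_apply_one_sub {N : ℕ} (hfN : f ^ N = 1) (x : M) :
    ∑ i ∈ Finset.range N, (f ^ i) ((1 - f) x) = 0 := by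
  have h := geom_sum_mul_neg f N
  rw [hfN, sub_self] at h
  simpa [LinearMap.sum_apply] using LinearMap.congr_fun h x

end Powers

section Discriminant

open LinearMap (BilinForm)
open scoped Matrix

/-- The Gram determinant of a bilinear form in a basis. Its class modulo nonzero squares, the
discriminant of the form, is independent of the basis. -/
noncomputable def gramDet {R M ι : Type*} [CommRing R] [AddCommGroup M] [Module R M] [Fintype ι]
    [DecidableEq ι] (B : BilinForm R M) (b : Module.Basis ι R M) : R :=
  (LinearMap.BilinForm.toMatrix b B).det

theorem gramDet_comp {R M ι : Type*} [CommRing R] [AddCommGroup M] [Module R M] [Fintype ι]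
    [DecidableEq ι] (B : BilinForm R M) (f : Module.End R M) (b : Module.Basis ι R M) :
    gramDet (B ∘ₗ f) b = gramDet B b * LinearMap.det f := by
  have h : LinearMap.BilinForm.toMatrix b (B ∘ₗ f) =
      (LinearMap.toMatrix b b f)ᵀ * LinearMap.BilinForm.toMatrix b B :=
    LinearMap.BilinForm.toMatrix_compLeft b B f
  rw [gramDet, gramDet, h, Matrix.det_mul, Matrix.det_transpose, LinearMap.det_toMatrix, mul_comm]

variable {K V ι κ τ : Type*} [Field K] [AddCommGroup V] [Module K V] [Fintype ι] [DecidableEq ι]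
  [Fintype κ] [DecidableEq κ] [Fintype τ] [DecidableEq τ]

theorem exists_gramDet_eq_sq_mul (B : BilinForm K V) (b : Module.Basis ι K V)
    (c : Module.Basis κ K V) : ∃ s ≠ 0, gramDet B b = s ^ 2 * gramDet B c := by
  let b' := b.reindex (b.indexEquiv c)
  have hb' : gramDet B b' = gramDet B b := by
    rw [gramDet, gramDet, ← Matrix.det_submatrix_equiv_self (b.indexEquiv c).symm]
    congr 1
    ext i j
    simp [b', LinearMap.BilinForm.toMatrix_apply]
  refine ⟨(c.toMatrix b').det, ?_, ?_⟩
  · rw [← Module.Basis.det_apply]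
    exact (c.isUnit_det b').ne_zero
  · rw [← hb', gramDet, ← LinearMap.BilinForm.toMatrix_mul_basis_toMatrix c b', Matrix.det_mul,
      Matrix.det_mul, Matrix.det_transpose, gramDet]
    ring

theorem exists_gramDet_eq_sq_mul_of_isCompl (B : BilinForm K V) {p q : Submodule K V}
    (h : IsCompl p q) (hpq : ∀ x ∈ p, ∀ y ∈ q, B x y = 0) (a : Module.Basis τ K V)
    (b : Module.Basis ι K p) (c : Module.Basis κ K q) :
    ∃ s ≠ 0, gramDet B a = s ^ 2 * (gramDet (B.restrict p) b * gramDet (B.restrict q) c) := by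
  have hdet : gramDet B ((b.prod c).map (Submodule.prodEquivOfIsCompl p q h)) =
      gramDet (B.restrict p) b * gramDet (B.restrict q) c := by
    rw [gramDet, gramDet, gramDet, ← Matrix.det_fromBlocks_zero₁₂ _ (.of fun i j => B (c i) (b j))]
    congr 1
    ext (i | i) (j | j) <;>
      simp [LinearMap.BilinForm.toMatrix_apply, hpq _ (b _).2 _ (c _).2]
  rw [← hdet]
  exact exists_gramDet_eq_sq_mul B a _

theorem exists_basis_isCompl_orthogonal_of_isAlt [FiniteDimensional K V] {B : BilinForm K V}
    (hB : B.IsAlt) (hB0 : B ≠ 0) :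
    ∃ (p : Submodule K V) (e : Module.Basis (Fin 2) K p),
      IsSquare (gramDet (B.restrict p) e) ∧ IsCompl p (B.orthogonal p) := by
  obtain ⟨x, y, hxy⟩ : ∃ x y, B x y ≠ 0 := by
    by_contra! h
    exact hB0 (LinearMap.ext₂ h)
  have hli : LinearIndependent K ![x, y] := by
    rw [LinearIndependent.pair_iff]
    intro s t hst
    have hs := congrArg (B · y) hst
    have ht := congrArg (B x) hst
    simp only [map_add, map_smul, LinearMap.add_apply, LinearMap.smul_apply, hB.self_eq_zero,
      smul_zero, add_zero, zero_add, map_zero, LinearMap.zero_apply, smul_eq_zero, hxy,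
      or_false] at hs ht
    exact ⟨hs, ht⟩
  let e := Module.Basis.span hli
  have he (i : Fin 2) : (e i : V) = ![x, y] i :=
    congrArg Subtype.val (Module.Basis.span_apply hli i)
  have hdet : gramDet (B.restrict _) e = B x y ^ 2 := by
    simp [gramDet, Matrix.det_fin_two, LinearMap.BilinForm.toMatrix_apply, he, hB.self_eq_zero,
      ← hB.neg_eq x y, sq]
  exact ⟨_, e, hdet ▸ IsSquare.sq _,
    LinearMap.BilinForm.isCompl_orthogonal_of_restrict_nondegenerate hB.isRefl <|
      (LinearMap.BilinForm.nondegenerate_iff_det_ne_zero e).2 <|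
        hdet.trans_ne (pow_ne_zero 2 hxy)⟩

theorem isSquare_gramDet_of_isAlt {B : BilinForm K V} (hB : B.IsAlt) (b : Module.Basis ι K V) :
    IsSquare (gramDet B b) := by
  have : FiniteDimensional K V := b.finiteDimensional_of_finite
  suffices h : IsSquare (gramDet B (Module.finBasis K V)) by
    obtain ⟨s, -, hs⟩ := exists_gramDet_eq_sq_mul B b (Module.finBasis K V)
    exact hs ▸ (IsSquare.sq s).mul h
  clear b
  obtain ⟨d, hd⟩ : ∃ d, Module.finrank K V = d := ⟨_, rfl⟩
  induction d using Nat.strong_induction_on generalizing V with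
  | _ d ih =>
    rcases eq_or_ne B 0 with rfl | hB0
    · cases isEmpty_or_nonempty (Fin (Module.finrank K V)) <;> simp [gramDet]
    obtain ⟨p, e, he, hp⟩ := exists_basis_isCompl_orthogonal_of_isAlt hB hB0
    obtain ⟨s, -, hs⟩ := exists_gramDet_eq_sq_mul_of_isCompl B hp (fun u hu v hv => hv u hu)
      (Module.finBasis K V) e (Module.finBasis K (B.orthogonal p))
    have hlt : Module.finrank K (B.orthogonal p) < d := by
      rw [← hd, ← Submodule.finrank_add_eq_of_isCompl hp, Module.finrank_eq_card_basis e]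
      simp
    exact hs ▸ (IsSquare.sq s).mul
      (he.mul (ih _ hlt (B := B.restrict (B.orthogonal p)) (fun u => hB u) inferInstance rfl))

theorem gramDet_pos [LinearOrder K] [IsStrictOrderedRing K] {B : BilinForm K V} (hB : B.IsSymm)
    (hpos : ∀ x, x ≠ 0 → 0 < B x x) (b : Module.Basis ι K V) : 0 < gramDet B b := by
  have : FiniteDimensional K V := b.finiteDimensional_of_finite
  have : Invertible (2 : K) := invertibleOfNonzero two_ne_zero
  obtain ⟨c, hc⟩ := LinearMap.BilinForm.exists_orthogonal_basis (B := B) ⟨hB.eq⟩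
  obtain ⟨s, hs, h⟩ := exists_gramDet_eq_sq_mul B b c
  have hdiag : LinearMap.BilinForm.toMatrix c B = .diagonal fun i => B (c i) (c i) := by
    ext i j
    rcases eq_or_ne i j with rfl | hij
    · simp [LinearMap.BilinForm.toMatrix_apply]
    · simpa [LinearMap.BilinForm.toMatrix_apply, hij] using hc hij
  rw [h, gramDet, hdiag, Matrix.det_diagonal]
  exact mul_pos (by positivity) (Finset.prod_pos fun i _ => hpos _ (c.ne_zero i))

end Discriminant

section OddOrder

open LinearMap (BilinForm)

variable {R M T : Type*} [CommRing R] [AddCommGroup M] [Module R M] [AddCommGroup T] [Module R T]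

/-- The pairing `(x, y) ↦ b x (s y) - b (s x) y`. It is alternating when `b` is symmetric, and it
turns an isometry `s` of odd order into a square, see `skewPairing_comp`. -/
def skewPairing (b : M →ₗ[R] M →ₗ[R] T) (s : Module.End R M) : M →ₗ[R] M →ₗ[R] T :=
  b.compl₂ s - b ∘ₗ s

theorem skewPairing_isAlt {b : M →ₗ[R] M →ₗ[R] T} (hb : ∀ x y, b x y = b y x)
    (s : Module.End R M) : (skewPairing b s).IsAlt := fun x => by
  simp [skewPairing, hb x]

theorem skewPairing_comp {b : M →ₗ[R] M →ₗ[R] T} {s : Module.End R M}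
    (hs : ∀ x y, b (s x) (s y) = b x y) : skewPairing b s ∘ₗ s = b ∘ₗ (1 - s ^ 2) := by
  ext x y
  simp [skewPairing, hs, sq]

theorem ker_skewPairing {b : M →ₗ[R] M →ₗ[R] T} {s : Module.End R M}
    (hs : ∀ x y, b (s x) (s y) = b x y) (hsurj : Function.Surjective s)
    (hfix : ∀ x, x - (s ^ 2) x ∈ LinearMap.ker b → x ∈ LinearMap.ker b) :
    LinearMap.ker (skewPairing b s) = LinearMap.ker b := by
  have hstable (x : M) : s x ∈ LinearMap.ker b ↔ x ∈ LinearMap.ker b := by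
    simp only [LinearMap.mem_ker, LinearMap.ext_iff, LinearMap.zero_apply]
    rw [hsurj.forall]
    simp only [hs]
  have hfix' (x : M) : x - (s ^ 2) x ∈ LinearMap.ker b ↔ x ∈ LinearMap.ker b :=
    ⟨hfix x, fun hx => sub_mem hx (by rwa [sq, Module.End.mul_apply, hstable, hstable])⟩
  ext x
  obtain ⟨x, rfl⟩ := hsurj x
  rw [hstable, ← hfix', LinearMap.mem_ker, LinearMap.mem_ker, ← LinearMap.comp_apply,
    skewPairing_comp hs]
  rfl

theorem isometry_pow {b : M →ₗ[R] M →ₗ[R] T} {f : Module.End R M}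
    (hf : ∀ x y, b (f x) (f y) = b x y) (k : ℕ) (x y : M) : b ((f ^ k) x) ((f ^ k) y) = b x y := by
  induction k with
  | zero => simp
  | succ k ih => simp [pow_succ', hf, ih]

theorem exists_pow_sq_eq_of_odd {G : Type*} [Monoid G] {g : G} {N : ℕ} (hN : Odd N)
    (hg : g ^ N = 1) : ∃ k, (g ^ k) ^ 2 = g := by
  obtain ⟨c, rfl⟩ := hN
  exact ⟨c + 1, by rw [← pow_mul, show (c + 1) * 2 = 2 * c + 1 + 1 by ring, pow_succ, hg, one_mul]⟩

theorem isSquare_gramDet_mul_det_one_sub {K V ι : Type*} [Field K] [AddCommGroup V] [Module K V]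
    [Fintype ι] [DecidableEq ι] {B : BilinForm K V} (hB : B.IsSymm) {f : Module.End K V}
    (hf : ∀ x y, B (f x) (f y) = B x y) {N : ℕ} (hN : Odd N) (hfN : f ^ N = 1)
    (b : Module.Basis ι K V) : IsSquare (gramDet B b * LinearMap.det (1 - f)) := by
  obtain ⟨k, hk⟩ := exists_pow_sq_eq_of_odd hN hfN
  have hdet : gramDet B b * LinearMap.det (1 - f) =
      gramDet (skewPairing B (f ^ k)) b * LinearMap.det (f ^ k) := by
    rw [← gramDet_comp, ← gramDet_comp, skewPairing_comp (isometry_pow hf k), hk]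
  obtain ⟨j, hj⟩ := exists_pow_sq_eq_of_odd (g := LinearMap.det (f ^ k)) hN (by
    rw [← map_pow, pow_right_comm, hfN, one_pow, map_one])
  rw [hdet]
  exact (isSquare_gramDet_of_isAlt (skewPairing_isAlt hB.eq _) b).mul (hj ▸ IsSquare.sq _)

end OddOrder

section Cyclotomic

open Polynomial

theorem exists_eq_cyclotomic_of_dvd_charpoly {V : Type*} [AddCommGroup V] [Module ℚ V]
    [FiniteDimensional ℚ V] {f : Module.End ℚ V} {N : ℕ} (hN : 0 < N) (hf : f ^ N = 1) {q : ℚ[X]}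
    (hq : Irreducible q) (hmonic : q.Monic) (hdvd : q ∣ f.charpoly) :
    ∃ d, d ∣ N ∧ q = cyclotomic d ℚ := by
  let A := LinearMap.toMatrix (Module.finBasis ℚ V) (Module.finBasis ℚ V) f
  have hA : (A.map (algebraMap ℚ ℂ)) ^ N = 1 := by
    rw [← Matrix.map_pow, show A ^ N = _ from LinearMap.toMatrix_pow _ f N, hf,
      LinearMap.toMatrix_one]
    exact Matrix.map_one _ (map_zero _) (map_one _)
  obtain ⟨α, hα⟩ := IsAlgClosed.exists_aeval_eq_zero ℂ q hq.degree_pos.ne'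
  have hαA : α ∈ spectrum ℂ (A.map (algebraMap ℚ ℂ)) := by
    rw [Matrix.mem_spectrum_iff_isRoot_charpoly, Matrix.charpoly_map, IsRoot.def,
      eval_map_algebraMap, LinearMap.charpoly_toMatrix]
    exact aeval_eq_zero_of_dvd_aeval_eq_zero hdvd hα
  have hαN : α ^ N = 1 := by
    have h := spectrum.pow_mem_pow _ N hαA
    rw [hA, spectrum.mem_iff, ← map_one (algebraMap ℂ _), ← map_sub] at h
    exact sub_eq_zero.1 <| not_not.1 fun h0 => h ((IsUnit.mk0 _ h0).map _)
  have hdvd := orderOf_dvd_of_pow_eq_one hαN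
  refine ⟨orderOf α, hdvd, ?_⟩
  rw [cyclotomic_eq_minpoly_rat (IsPrimitiveRoot.orderOf α) (Nat.pos_of_dvd_of_pos hdvd hN)]
  exact minpoly.eq_of_irreducible_of_monic hq hα hmonic

theorem four_dvd_totient_of_forall_prime_pow_ne {d : ℕ} (hd : Odd d) (hd1 : d ≠ 1)
    (h : ∀ {p : ℕ}, p.Prime → ∀ k : ℕ, p ^ k ≠ d) : 4 ∣ d.totient := by
  have hp := Nat.minFac_prime hd1
  have hd0 : d ≠ 0 := hd.pos.ne'
  have hfac := Nat.ordProj_mul_ordCompl_eq_self d d.minFac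
  have two_lt {m : ℕ} (hm : m ∣ d) (hm1 : m ≠ 1) : 2 < m := by
    obtain ⟨c, rfl⟩ := hd.of_dvd_nat hm
    omega
  have heven {m : ℕ} (hm : m ∣ d) (hm1 : m ≠ 1) : 2 ∣ m.totient :=
    (Nat.totient_even (two_lt hm hm1)).two_dvd
  rw [← hfac, Nat.totient_mul ((Nat.coprime_ordCompl hp hd0).pow_left _)]
  refine mul_dvd_mul (heven (Nat.ordProj_dvd d _) ?_) (heven (Nat.ordCompl_dvd d _) ?_)
  · rw [Ne, Nat.pow_eq_one, not_or]
    exact ⟨hp.one_lt.ne', (hp.factorization_pos_of_dvd hd0 (Nat.minFac_dvd d)).ne'⟩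
  · exact fun h1 => h hp _ (by rwa [h1, mul_one] at hfac)

theorem exists_eval_one_cyclotomic_eq {d : ℕ} (hd : Odd d) (hd1 : d ≠ 1) :
    ∃ D : ℕ, Odd D ∧ (cyclotomic d ℚ).eval 1 = D ∧ d.totient + 1 ≡ D [MOD 4] := by
  by_cases h : ∃ p k : ℕ, p.Prime ∧ p ^ k = d
  · obtain ⟨p, k, hp, rfl⟩ := h
    obtain ⟨k, rfl⟩ := Nat.exists_eq_succ_of_ne_zero (n := k) (by rintro rfl; simp at hd1)
    have := Fact.mk hp
    have hp2 : Odd p := Nat.Odd.of_mul_right hd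
    refine ⟨p, hp2, eval_one_cyclotomic_prime_pow k, ?_⟩
    rw [Nat.totient_prime_pow_succ hp]
    obtain ⟨c, rfl⟩ := hp2
    obtain ⟨e, he⟩ : Odd ((2 * c + 1) ^ k) := (odd_two_mul_add_one c).pow
    rw [he, Nat.add_sub_cancel]
    exact Nat.modEq_iff_dvd.2 ⟨-(e * c), by push_cast; ring⟩
  · push Not at h
    obtain ⟨c, hc⟩ := four_dvd_totient_of_forall_prime_pow_ne hd hd1 fun hp k => h _ k hp
    refine ⟨1, odd_one, by simpa using eval_one_cyclotomic_not_prime_pow fun hp k => h _ k hp, ?_⟩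
    rw [hc]
    exact Nat.modEq_iff_dvd.2 ⟨-c, by push_cast; ring⟩

/-- The monic rational polynomials `P` for which `P(1)` is an odd natural number congruent to
`deg P + 1` modulo `4`. -/
def oddEvalOne : Submonoid ℚ[X] where
  carrier := {P | P.Monic ∧ ∃ D : ℕ, Odd D ∧ P.eval 1 = D ∧ P.natDegree + 1 ≡ D [MOD 4]}
  one_mem' := ⟨monic_one, 1, odd_one, by simp, by simp [Nat.ModEq]⟩
  mul_mem' := by
    rintro P Q ⟨hP, D, ⟨c, rfl⟩, hPD, hD⟩ ⟨hQ, E, ⟨e, rfl⟩, hQE, hE⟩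
    refine ⟨hP.mul hQ, (2 * c + 1) * (2 * e + 1), by simp [parity_simps], ?_, ?_⟩
    · rw [eval_mul, hPD, hQE, Nat.cast_mul]
    · have hprod : (2 * c + 1) * (2 * e + 1) = 4 * (c * e) + 2 * c + 2 * e + 1 := by ring
      rw [hP.natDegree_mul hQ, hprod]
      unfold Nat.ModEq at *
      omega

theorem mem_oddEvalOne_of_forall_irreducible {P : ℚ[X]} (hP : P.Monic) (h1 : P.eval 1 ≠ 0)
    (h : ∀ q : ℚ[X], Irreducible q → q.Monic → q ∣ P → ∃ d, Odd d ∧ q = cyclotomic d ℚ) :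
    P ∈ oddEvalOne := by
  rw [← hP.normalize_eq_self, ← UniqueFactorizationMonoid.prod_normalizedFactors_eq hP.ne_zero]
  refine Submonoid.multiset_prod_mem _ _ fun q hq => ?_
  have hqP := UniqueFactorizationMonoid.dvd_of_mem_normalizedFactors hq
  have hqi := UniqueFactorizationMonoid.irreducible_of_normalized_factor q hq
  have hqm : q.Monic := by
    rw [← UniqueFactorizationMonoid.normalize_normalized_factor q hq]
    exact monic_normalize hqi.ne_zero
  obtain ⟨d, hd, rfl⟩ := h q hqi hqm hqP
  have hd1 : d ≠ 1 := by
    rintro rfl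
    exact h1 (eval_eq_zero_of_dvd_of_eval_eq_zero hqP (by simp))
  exact ⟨hqm, natDegree_cyclotomic d ℚ ▸ exists_eval_one_cyclotomic_eq hd hd1⟩

theorem exists_det_one_sub_eq {V : Type*} [AddCommGroup V] [Module ℚ V] [FiniteDimensional ℚ V]
    {f : Module.End ℚ V} {N : ℕ} (hN : Odd N) (hf : f ^ N = 1)
    (hdet : LinearMap.det (1 - f) ≠ 0) :
    ∃ D : ℕ, Odd D ∧ LinearMap.det (1 - f) = (D : ℚ) ∧ Module.finrank ℚ V + 1 ≡ D [MOD 4] := by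
  have heval : f.charpoly.eval 1 = LinearMap.det (1 - f) := by
    rw [LinearMap.eval_charpoly, map_one]
  rw [← heval] at hdet ⊢
  rw [← f.charpoly_natDegree]
  refine (mem_oddEvalOne_of_forall_irreducible f.charpoly_monic hdet fun q hq hm hdvd => ?_).2
  obtain ⟨d, hd, rfl⟩ := exists_eq_cyclotomic_of_dvd_charpoly hN.pos hf hq hm hdvd
  exact ⟨d, hN.of_dvd_nat hd, rfl⟩

end Cyclotomic

section ModFour

open Matrix

theorem det_add_transpose_of_four_eq_zero {R ι : Type*} [CommRing R] [Fintype ι] [DecidableEq ι]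
    (h4 : (4 : R) = 0) {U : Matrix ι ι R} (hU : IsUnit (U - Uᵀ).det) :
    (U + Uᵀ).det = (1 - Fintype.card ι) * (U - Uᵀ).det := by
  set C := U - Uᵀ with hC
  have hskew : Cᵀ = -C := by rw [hC, transpose_sub, transpose_transpose, neg_sub]
  have hsum : U + Uᵀ = C * (1 + (2 : R) • (C⁻¹ * Uᵀ)) := by
    rw [mul_add, mul_one, mul_smul_comm, mul_nonsing_inv_cancel_left _ _ hU, hC, two_smul]
    abel
  have htrace : 2 * (C⁻¹ * Uᵀ).trace = -Fintype.card ι := by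
    have hinv : (-C)⁻¹ = -C⁻¹ := inv_eq_left_inv (by rw [neg_mul_neg, nonsing_inv_mul _ hU])
    have h1 : (C⁻¹ * U).trace = -(C⁻¹ * Uᵀ).trace := by
      rw [← trace_transpose, transpose_mul, transpose_nonsing_inv, hskew, hinv, trace_mul_comm,
        neg_mul, trace_neg]
    have h2 : (C⁻¹ * U).trace - (C⁻¹ * Uᵀ).trace = Fintype.card ι := by
      rw [← trace_sub, ← mul_sub, nonsing_inv_mul _ hU, trace_one]
    linear_combination -h2 + h1
  obtain ⟨e, he⟩ : ∃ e, det (1 + (2 : R) • (C⁻¹ * Uᵀ)) = 1 + 2 * (C⁻¹ * Uᵀ).trace + 2 ^ 2 * e := by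
    rw [det_one_add_smul, mul_comm (2 : R), mul_comm _ ((2 : R) ^ 2)]
    exact ⟨_, rfl⟩
  rw [hsum, det_mul, he, htrace]
  linear_combination (e * C.det) * h4

theorem isSquare_det_sub_transpose {K ι : Type*} [Field K] [Fintype ι] [DecidableEq ι]
    (U : Matrix ι ι K) : IsSquare (U - Uᵀ).det := by
  have halt : (toBilin' (U - Uᵀ)).IsAlt := fun x => by
    rw [toBilin'_apply', sub_mulVec, dotProduct_sub, mulVec_transpose, dotProduct_mulVec,
      dotProduct_comm, sub_self]
  simpa [gramDet, LinearMap.BilinForm.toMatrix_basisFun, LinearMap.BilinForm.toMatrix'_toBilin']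
    using isSquare_gramDet_of_isAlt halt (Pi.basisFun K ι)

theorem modEq_one_of_isSquare_of_odd {n : ℤ} (h : IsSquare n) (hodd : Odd n) : n ≡ 1 [ZMOD 4] := by
  obtain ⟨r, rfl⟩ := h
  rw [← sq] at hodd ⊢
  exact Int.sq_mod_four_eq_one_of_odd ((Int.odd_pow' two_ne_zero).1 hodd)

theorem det_add_transpose_modEq {ι : Type*} [Fintype ι] [DecidableEq ι] {U : Matrix ι ι ℤ}
    (hodd : Odd (U + Uᵀ).det) : (U + Uᵀ).det ≡ 1 - Fintype.card ι [ZMOD 4] := by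
  have hadd (R : Type) [CommRing R] : ((U + Uᵀ).det : R) =
      (U.map (Int.cast : ℤ → R) + (U.map (Int.cast : ℤ → R))ᵀ).det := by
    rw [Int.cast_det, Matrix.map_add _ Int.cast_add, transpose_map]
  have hsub (R : Type) [CommRing R] : ((U - Uᵀ).det : R) =
      (U.map (Int.cast : ℤ → R) - (U.map (Int.cast : ℤ → R))ᵀ).det := by
    rw [Int.cast_det, Matrix.map_sub _ Int.cast_sub, transpose_map]
  have hCodd : Odd (U - Uᵀ).det := by
    rw [← ZMod.intCast_eq_one_iff_odd] at hodd ⊢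
    rw [← hodd, hadd, hsub]
    congr 1
    ext
    simp [CharTwo.sub_eq_add]
  have hCsq : IsSquare (U - Uᵀ).det := by
    rw [← Rat.isSquare_intCast_iff, hsub]
    exact isSquare_det_sub_transpose _
  have hC1 : ((U - Uᵀ).det : ZMod 4) = 1 := by
    exact_mod_cast (ZMod.intCast_eq_intCast_iff _ 1 4).2 (modEq_one_of_isSquare_of_odd hCsq hCodd)
  refine (ZMod.intCast_eq_intCast_iff _ _ 4).1 ?_
  rw [hsub] at hC1
  rw [hadd, det_add_transpose_of_four_eq_zero rfl (hC1 ▸ isUnit_one), hC1]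
  simp

theorem exists_add_transpose_eq {ι : Type*} [LinearOrder ι] {G : Matrix ι ι ℤ} (hG : G.IsSymm)
    (heven : ∀ i, Even (G i i)) : ∃ U, U + Uᵀ = G := by
  refine ⟨.of fun i j => if i < j then G i j else if i = j then G i i / 2 else 0, ?_⟩
  ext i j
  rcases lt_trichotomy i j with h | rfl | h
  · simp [h, h.not_gt, h.ne']
  · obtain ⟨m, hm⟩ := heven i
    simp only [Matrix.add_apply, Matrix.transpose_apply, Matrix.of_apply, lt_irrefl, if_false,
      if_true]
    omega
  · simp [h, h.not_gt, h.ne', hG.apply]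

end ModFour

section CirclePairing

variable {X Y : Type*} [AddCommGroup X] [AddCommGroup Y]

theorem finite_and_card_dual_le (Y : Type*) [AddCommGroup Y] [Finite Y] :
    Finite (Y →ₗ[ℤ] UnitAddCircle) ∧ Nat.card (Y →ₗ[ℤ] UnitAddCircle) ≤ Nat.card Y := by
  have := Fintype.ofFinite Y
  let toAddChar (φ : Y →ₗ[ℤ] UnitAddCircle) : AddChar Y ℂ :=
    Circle.coeHom.compAddChar (AddCircle.toCircle_addChar.compAddMonoidHom φ.toAddMonoidHom)
  have hinj : Function.Injective toAddChar := fun φ ψ h => LinearMap.ext fun y =>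
    AddCircle.injective_toCircle one_ne_zero (Circle.coe_injective (DFunLike.congr_fun h y))
  refine ⟨Finite.of_injective _ hinj, (Nat.card_le_card_of_injective _ hinj).trans_eq ?_⟩
  rw [Nat.card_eq_fintype_card, Nat.card_eq_fintype_card, AddChar.card_eq]

theorem index_ker_le_index_ker_flip (p : X →ₗ[ℤ] Y →ₗ[ℤ] UnitAddCircle)
    (hp : (LinearMap.ker p.flip).toAddSubgroup.index ≠ 0) :
    (LinearMap.ker p).toAddSubgroup.index ≠ 0 ∧
      (LinearMap.ker p).toAddSubgroup.index ≤ (LinearMap.ker p.flip).toAddSubgroup.index := by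
  have hfin : Finite (Y ⧸ LinearMap.ker p.flip) := Nat.finite_of_card_ne_zero hp
  obtain ⟨hdual, hcard⟩ := finite_and_card_dual_le (Y ⧸ LinearMap.ker p.flip)
  have hker (x : X) : LinearMap.ker p.flip ≤ LinearMap.ker (p x) := fun y hy =>
    DFunLike.congr_fun (LinearMap.mem_ker.1 hy) x
  let descend (φ : LinearMap.range p) : (Y ⧸ LinearMap.ker p.flip) →ₗ[ℤ] UnitAddCircle :=
    (LinearMap.ker p.flip).liftQ φ.1 (by obtain ⟨_, x, rfl⟩ := φ; exact hker x)
  have hinj : Function.Injective descend := fun φ ψ h => Subtype.ext <| LinearMap.ext fun y =>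
    DFunLike.congr_fun h (Submodule.Quotient.mk y)
  have hindex : (LinearMap.ker p).toAddSubgroup.index = Nat.card (LinearMap.range p) :=
    Nat.card_congr p.quotKerEquivRange.toEquiv
  have := Finite.of_injective _ hinj
  rw [hindex]
  exact ⟨Nat.card_pos.ne', (Nat.card_le_card_of_injective _ hinj).trans hcard⟩

theorem index_ker_eq_index_ker_flip (p : X →ₗ[ℤ] Y →ₗ[ℤ] UnitAddCircle)
    (hp : (LinearMap.ker p).toAddSubgroup.index ≠ 0) :
    (LinearMap.ker p).toAddSubgroup.index = (LinearMap.ker p.flip).toAddSubgroup.index := by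
  obtain ⟨hflip, hle⟩ := index_ker_le_index_ker_flip p.flip hp
  exact (index_ker_le_index_ker_flip p hflip).2.antisymm hle

/-- The submodules on which the pairing `C` vanishes identically. -/
def IsIsotropic (C : X →ₗ[ℤ] X →ₗ[ℤ] UnitAddCircle) (I : Submodule ℤ X) : Prop :=
  ∀ x ∈ I, ∀ y ∈ I, C x y = 0

theorem IsIsotropic.sup {C : X →ₗ[ℤ] X →ₗ[ℤ] UnitAddCircle} (hC : C.IsAlt) {I J : Submodule ℤ X}
    (hI : IsIsotropic C I) (hJ : IsIsotropic C J) (hIJ : ∀ x ∈ I, ∀ y ∈ J, C x y = 0) :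
    IsIsotropic C (I ⊔ J) := by
  intro x hx y hy
  obtain ⟨a, ha, b, hb, rfl⟩ := Submodule.mem_sup.1 hx
  obtain ⟨c, hc, d, hd, rfl⟩ := Submodule.mem_sup.1 hy
  have hbc : C b c = 0 := hC.eq_iff.1 (hIJ c hc b hb)
  simp [hI a ha c hc, hJ b hb d hd, hIJ a ha d hd, hbc]

theorem exists_isIsotropic_maximal {C : X →ₗ[ℤ] X →ₗ[ℤ] UnitAddCircle} (hC : C.IsAlt)
    (hker : (LinearMap.ker C).toAddSubgroup.index ≠ 0) :
    ∃ I, LinearMap.ker C ≤ I ∧ IsIsotropic C I ∧ ∀ x, (∀ y ∈ I, C x y = 0) → x ∈ I := by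
  obtain ⟨I, ⟨hkerI, hI⟩, hmin⟩ := exists_minimalFor_of_wellFoundedLT
    (fun I => LinearMap.ker C ≤ I ∧ IsIsotropic C I) (fun I => I.toAddSubgroup.index)
    ⟨_, le_rfl, fun x hx y _ => DFunLike.congr_fun (LinearMap.mem_ker.1 hx) y⟩
  refine ⟨I, hkerI, hI, fun x hx => ?_⟩
  have hspan : IsIsotropic C (Submodule.span ℤ {x}) := by
    intro y hy z hz
    obtain ⟨m, rfl⟩ := Submodule.mem_span_singleton.1 hy
    obtain ⟨n, rfl⟩ := Submodule.mem_span_singleton.1 hz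
    simp [hC.self_eq_zero]
  have hsup : IsIsotropic C (I ⊔ Submodule.span ℤ {x}) := hI.sup hC hspan fun y hy z hz => by
    obtain ⟨m, rfl⟩ := Submodule.mem_span_singleton.1 hz
    simp [hC.eq_iff.1 (hx y hy)]
  have hle : I.toAddSubgroup ≤ (I ⊔ Submodule.span ℤ {x}).toAddSubgroup :=
    le_sup_left (a := I)
  have hI0 : I.toAddSubgroup.index ≠ 0 :=
    ne_zero_of_dvd_ne_zero hker (AddSubgroup.index_dvd_of_le hkerI)
  have hdvd := AddSubgroup.index_dvd_of_le hle
  have hindex := (Nat.le_of_dvd (Nat.pos_of_ne_zero hI0) hdvd).antisymm'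
    (hmin ⟨hkerI.trans le_sup_left, hsup⟩ (Nat.le_of_dvd (Nat.pos_of_ne_zero hI0) hdvd))
  have hone : I.toAddSubgroup.relIndex (I ⊔ Submodule.span ℤ {x}).toAddSubgroup = 1 :=
    (Nat.mul_eq_right hI0).1
      ((congrArg (_ * ·) hindex).trans (AddSubgroup.relIndex_mul_index hle))
  exact AddSubgroup.relIndex_eq_one.1 hone
    (le_sup_right (a := I) (Submodule.mem_span_singleton_self x))

theorem isSquare_index_ker_of_isAlt {C : X →ₗ[ℤ] X →ₗ[ℤ] UnitAddCircle} (hC : C.IsAlt)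
    (hker : (LinearMap.ker C).toAddSubgroup.index ≠ 0) :
    IsSquare (LinearMap.ker C).toAddSubgroup.index := by
  obtain ⟨I, hkerI, hI, hmax⟩ := exists_isIsotropic_maximal hC hker
  let p : X →ₗ[ℤ] I →ₗ[ℤ] UnitAddCircle := C.compl₂ I.subtype
  have hp : LinearMap.ker p = I := by
    ext x
    refine ⟨fun hx => hmax x fun y hy => DFunLike.congr_fun (LinearMap.mem_ker.1 hx) ⟨y, hy⟩,
      fun hx => LinearMap.ext fun y => hI x hx y y.2⟩
  have hpflip : (LinearMap.ker p.flip) = (LinearMap.ker C).comap I.subtype := by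
    ext y
    simp [p, LinearMap.ext_iff, hC.eq_iff]
  have hle : (LinearMap.ker C).toAddSubgroup ≤ I.toAddSubgroup := hkerI
  have hmul := AddSubgroup.relIndex_mul_index hle
  have hrel : (LinearMap.ker C).toAddSubgroup.relIndex I.toAddSubgroup = I.toAddSubgroup.index := by
    have hI0 := ne_zero_of_dvd_ne_zero hker (AddSubgroup.index_dvd_of_le hle)
    have hflip := index_ker_eq_index_ker_flip p (by rwa [hp])
    rw [hp, hpflip] at hflip
    exact hflip.symm
  exact ⟨_, by rw [← hmul, hrel]⟩

theorem isSquare_index_ker_of_isometry {b : X →ₗ[ℤ] X →ₗ[ℤ] UnitAddCircle}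
    (hb : ∀ x y, b x y = b y x) {f : Module.End ℤ X} (hf : ∀ x y, b (f x) (f y) = b x y) {N : ℕ}
    (hN : Odd N) (hfN : f ^ N = 1)
    (hfix : ∀ x, x - f x ∈ LinearMap.ker b → x ∈ LinearMap.ker b)
    (hker : (LinearMap.ker b).toAddSubgroup.index ≠ 0) :
    IsSquare (LinearMap.ker b).toAddSubgroup.index := by
  obtain ⟨k, hk⟩ := exists_pow_sq_eq_of_odd hN hfN
  have hunit : IsUnit (f ^ k) := (IsUnit.of_pow_eq_one hfN hN.pos.ne').pow k
  have hC : LinearMap.ker (skewPairing b (f ^ k)) = LinearMap.ker b :=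
    ker_skewPairing (isometry_pow hf k) ((Module.End.isUnit_iff _).1 hunit).surjective (by rwa [hk])
  rw [← hC] at hker ⊢
  exact isSquare_index_ker_of_isAlt (skewPairing_isAlt hb _) hker

end CirclePairing

section Lattice

open LinearMap (BilinForm)
open Submodule (span)

variable {V ι : Type*} [AddCommGroup V] [Module ℚ V] [Fintype ι] [DecidableEq ι]

theorem exists_span_range_basis_eq (L : Submodule ℤ V) [L.IsLattice ℚ] :
    ∃ b : Module.Basis (Fin (Module.finrank ℚ V)) ℚ V, span ℤ (Set.range b) = L := by
  let b := Module.finBasis ℤ L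
  have hn : Module.finrank ℤ L = Module.finrank ℚ V :=
    congrArg Cardinal.toNat (Submodule.IsLattice.rank' ℚ L)
  refine ⟨(b.extendOfIsLattice ℚ).reindex (finCongr hn), ?_⟩
  have hb : ⇑(b.extendOfIsLattice ℚ) = L.subtype ∘ b := funext (b.extendOfIsLattice_apply ℚ)
  rw [Module.Basis.range_reindex, hb, Set.range_comp, Submodule.span_image, b.span_eq,
    Submodule.map_top, Submodule.range_subtype]

instance isLattice_comap_subtype (p : Submodule ℚ V) (L : Submodule ℤ V) [L.IsLattice ℚ] :
    (L.comap (p.subtype.restrictScalars ℤ)).IsLattice ℚ where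
  fg := by
    rw [← Module.Finite.iff_fg]
    exact Module.Finite.of_injective
      ((p.subtype.restrictScalars ℤ).restrict fun _ hx => hx : _ →ₗ[ℤ] L)
      fun x y h => Subtype.ext (Subtype.ext (congrArg (fun z : L => (z : V)) h))
  span_eq_top := eq_top_iff.2 fun x _ => by
    have hx : (x : V) ∈ span ℚ (L : Set V) := by simp [Submodule.IsLattice.span_eq_top]
    obtain ⟨y, hy, z, hz⟩ := (IsLocalization.mem_span_iff (nonZeroDivisors ℤ)).1 hx
    rw [Submodule.span_eq] at hy
    have hzx : (z : ℤ) • (x : V) = y := by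
      rw [hz, ← algebraMap_smul ℚ (z : ℤ), smul_smul, IsLocalization.mk'_spec', map_one, one_smul]
    have hmem : (z : ℤ) • x ∈ L.comap (p.subtype.restrictScalars ℤ) := by
      simpa [hzx] using hy
    have hz0 : ((z : ℤ) : ℚ) ≠ 0 := by exact_mod_cast nonZeroDivisors.ne_zero z.2
    rw [← inv_smul_smul₀ hz0 x, Int.cast_smul_eq_zsmul]
    exact Submodule.smul_mem _ _ (Submodule.subset_span hmem)

theorem nondegenerate_of_pos {R M : Type*} [CommRing R] [PartialOrder R] [AddCommGroup M]
    [Module R M] {B : BilinForm R M} (hpos : ∀ x, x ≠ 0 → 0 < B x x) :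
    B.Nondegenerate :=
  ⟨fun x hx => by_contra fun h => (hpos x h).ne' (hx x),
    fun x hx => by_contra fun h => (hpos x h).ne' (hx x)⟩

theorem relIndex_dualSubmodule_eq_abs_gramDet {B : BilinForm ℚ V} (hB : B.Nondegenerate)
    (b : Module.Basis ι ℚ V) (hb : span ℤ (Set.range b) ≤ B.dualSubmodule (span ℤ (Set.range b))) :
    ((span ℤ (Set.range b)).toAddSubgroup.relIndex
      (B.dualSubmodule (span ℤ (Set.range b))).toAddSubgroup : ℚ) = |gramDet B b| := by
  have hclosure (c : Module.Basis ι ℚ V) :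
      (span ℤ (Set.range c)).toAddSubgroup = .closure (Set.range c) :=
    Submodule.span_int_eq_addSubgroupClosure _
  rw [AddSubgroup.relIndex_eq_abs_det _ _ hb b (B.dualBasis hB b) (hclosure b)
    (by rw [LinearMap.BilinForm.dualSubmodule_span_of_basis, hclosure]), gramDet,
    ← Matrix.det_transpose, Module.Basis.det_apply]
  congr 2
  ext i j
  simp [Module.Basis.toMatrix_apply, LinearMap.BilinForm.toMatrix_apply]

theorem dualSubmodule_dualSubmodule {B : BilinForm ℚ V} (hB : B.Nondegenerate) (hs : B.IsSymm)
    (L : Submodule ℤ V) [L.IsLattice ℚ] : B.dualSubmodule (B.dualSubmodule L) = L := by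
  obtain ⟨b, rfl⟩ := exists_span_range_basis_eq L
  exact B.dualSubmodule_dualSubmodule_of_basis hB hs b

theorem apply_mem_dualSubmodule {R S M : Type*} [CommRing R] [Field S] [AddCommGroup M]
    [Algebra R S] [Module R M] [Module S M] [IsScalarTower R S M] {B : BilinForm S M}
    {L : Submodule R M} {f : Module.End S M}
    (hfL : ∀ x ∈ L, f x ∈ L) (hfB : ∀ x y, B (f x) (f y) = B x y) {N : ℕ} (hN : N ≠ 0)
    (hfN : f ^ N = 1) {x : M} (hx : x ∈ B.dualSubmodule L) : f x ∈ B.dualSubmodule L := by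
  intro y hy
  obtain ⟨n, rfl⟩ := Nat.exists_eq_succ_of_ne_zero hN
  rw [show y = f ((f ^ n) y) by rw [← Module.End.mul_apply, ← pow_succ', hfN]; rfl, hfB]
  exact hx _ (pow_apply_mem hfL hy n)

/-- The form `B` with values modulo `1`. On the dual of an integral lattice `L` it induces the
discriminant pairing of `L`. -/
noncomputable def circlePairing (B : BilinForm ℚ V) : V →ₗ[ℤ] V →ₗ[ℤ] UnitAddCircle :=
  LinearMap.mk₂ ℤ (fun x y => ((B x y : ℝ) : UnitAddCircle))
    (fun x y z => by simp) (fun c x y => by simp)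
    (fun x y z => by simp) (fun c x y => by simp)

theorem circlePairing_eq_zero_iff (B : BilinForm ℚ V) (x y : V) :
    circlePairing B x y = 0 ↔ B x y ∈ (1 : Submodule ℤ ℚ) := by
  change ((B x y : ℝ) : UnitAddCircle) = 0 ↔ _
  rw [AddCircle.coe_eq_zero_iff, Submodule.mem_one]
  refine exists_congr fun n => ?_
  simp only [zsmul_eq_mul, mul_one, eq_intCast]
  norm_cast

end Lattice

section EvenLattice

open LinearMap (BilinForm)
open Submodule (span)

variable {V : Type*} [AddCommGroup V] [Module ℚ V] {B : BilinForm ℚ V} {L : Submodule ℤ V}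

theorem relIndex_dualSubmodule_ne_zero (hB : B.Nondegenerate) [L.IsLattice ℚ]
    (hL : L ≤ B.dualSubmodule L) :
    L.toAddSubgroup.relIndex (B.dualSubmodule L).toAddSubgroup ≠ 0 := by
  obtain ⟨b, rfl⟩ := exists_span_range_basis_eq L
  rw [← Nat.cast_ne_zero (R := ℚ), relIndex_dualSubmodule_eq_abs_gramDet hB b hL, abs_ne_zero]
  exact (LinearMap.BilinForm.nondegenerate_iff_det_ne_zero b).1 hB

theorem isSquare_relIndex_dualSubmodule (hB : B.Nondegenerate) (hs : B.IsSymm) [L.IsLattice ℚ]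
    (hL : L ≤ B.dualSubmodule L) {f : Module.End ℚ V} (hfL : ∀ x ∈ L, f x ∈ L)
    (hfB : ∀ x y, B (f x) (f y) = B x y) {N : ℕ} (hN : Odd N) (hfN : f ^ N = 1)
    (hfix : ∀ y ∈ B.dualSubmodule L, f y - y ∈ L → y ∈ L) :
    IsSquare (L.toAddSubgroup.relIndex (B.dualSubmodule L).toAddSubgroup) := by
  let D := B.dualSubmodule L
  let p : D →ₗ[ℤ] D →ₗ[ℤ] UnitAddCircle := (circlePairing B).domRestrict₁₂ D D
  let g : Module.End ℤ D := (f.restrictScalars ℤ).restrict fun x hx =>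
    apply_mem_dualSubmodule hfL hfB hN.pos.ne' hfN hx
  have hker : LinearMap.ker p = L.comap D.subtype := by
    ext x
    rw [Submodule.mem_comap, Submodule.subtype_apply, ← dualSubmodule_dualSubmodule hB hs L,
      LinearMap.mem_ker, LinearMap.ext_iff, Subtype.forall]
    exact forall₂_congr fun y _ => circlePairing_eq_zero_iff B x y
  have hp (x y : D) : p x y = ((B x y : ℝ) : UnitAddCircle) := rfl
  have hgN : g ^ N = 1 := by
    have hfN' : f.restrictScalars ℤ ^ N = 1 := LinearMap.ext fun x => by
      simpa [Module.End.pow_apply] using LinearMap.congr_fun hfN x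
    refine (Module.End.pow_restrict N _).trans ?_
    ext x
    simp [hfN']
  have hindex : (LinearMap.ker p).toAddSubgroup.index =
      L.toAddSubgroup.relIndex (B.dualSubmodule L).toAddSubgroup := by rw [hker]; rfl
  rw [← hindex]
  refine isSquare_index_ker_of_isometry (f := g) (fun x y => ?_) (fun x y => ?_) hN hgN
    (fun x hx => ?_) (hindex ▸ relIndex_dualSubmodule_ne_zero hB hL)
  · rw [hp, hp, hs.eq]
  · rw [hp, hp]
    exact congrArg (fun q : ℚ => ((q : ℝ) : UnitAddCircle)) (hfB x y)
  · rw [hker] at hx ⊢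
    exact hfix x x.2 (by rw [← neg_sub]; exact L.neg_mem hx)

/-- A rational lattice all of whose vectors have even norm `B x x`. -/
def IsEvenLattice (B : BilinForm ℚ V) (L : Submodule ℤ V) : Prop :=
  ∀ x ∈ L, ∃ m : ℤ, B x x = 2 * m

theorem IsEvenLattice.le_dualSubmodule (hL : IsEvenLattice B L) (hs : B.IsSymm) :
    L ≤ B.dualSubmodule L := by
  intro x hx y hy
  obtain ⟨a, ha⟩ := hL x hx
  obtain ⟨b, hb⟩ := hL y hy
  obtain ⟨c, hc⟩ := hL (x + y) (add_mem hx hy)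
  refine Submodule.mem_one.2 ⟨c - a - b, ?_⟩
  have hexpand : B (x + y) (x + y) = B x x + 2 * B x y + B y y := by
    simp only [map_add, LinearMap.add_apply, hs.eq y x]
    ring
  push_cast [eq_intCast]
  linarith

theorem IsEvenLattice.exists_gramDet_eq {ι : Type*} [Fintype ι] [LinearOrder ι]
    {b : Module.Basis ι ℚ V} (hb : IsEvenLattice B (span ℤ (Set.range b))) (hs : B.IsSymm) :
    ∃ m : ℤ, gramDet B b = m ∧ (Odd m → m ≡ 1 - Fintype.card ι [ZMOD 4]) := by
  have hmem (i : ι) : b i ∈ span ℤ (Set.range b) := Submodule.subset_span ⟨i, rfl⟩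
  have hint (i j : ι) : ∃ m : ℤ, B (b i) (b j) = m := by
    obtain ⟨m, hm⟩ := Submodule.mem_one.1 (hb.le_dualSubmodule hs (hmem i) _ (hmem j))
    exact ⟨m, hm.symm⟩
  choose G hG using hint
  have hsymm : (Matrix.of G).IsSymm := Matrix.ext fun i j => by
    exact_mod_cast (hG j i).symm.trans ((hs.eq _ _).trans (hG i j))
  have heven (i : ι) : Even (Matrix.of G i i) := by
    obtain ⟨m, hm⟩ := hb _ (hmem i)
    exact even_iff_two_dvd.2 ⟨m, by exact_mod_cast (hG i i).symm.trans hm⟩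
  obtain ⟨U, hU⟩ := exists_add_transpose_eq hsymm heven
  refine ⟨(U + U.transpose).det, ?_, det_add_transpose_modEq⟩
  rw [hU, Int.cast_det, gramDet]
  congr 1
  ext i j
  simp [LinearMap.BilinForm.toMatrix_apply, hG]

theorem IsEvenLattice.exists_gramDet_eq_odd (hL : IsEvenLattice B L) (hs : B.IsSymm)
    (hB : B.Nondegenerate) [L.IsLattice ℚ]
    (hodd : Odd (L.toAddSubgroup.relIndex (B.dualSubmodule L).toAddSubgroup)) :
    ∃ (c : Module.Basis (Fin (Module.finrank ℚ V)) ℚ V) (m : ℤ),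
      gramDet B c = m ∧ Odd m ∧ m ≡ 1 - Module.finrank ℚ V [ZMOD 4] := by
  obtain ⟨c, rfl⟩ := exists_span_range_basis_eq L
  obtain ⟨m, hm, hmod⟩ := hL.exists_gramDet_eq hs
  have habs := relIndex_dualSubmodule_eq_abs_gramDet hB c (hL.le_dualSubmodule hs)
  rw [hm, ← Int.cast_abs, Int.abs_eq_natAbs, Int.cast_natCast, Nat.cast_inj] at habs
  have hm_odd : Odd m := Int.natAbs_odd.1 (habs ▸ hodd)
  exact ⟨c, m, hm, hm_odd, by simpa using hmod hm_odd⟩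

theorem odd_relIndex_of_smul_mem {G : Type*} [AddCommGroup G] {H K : AddSubgroup G}
    (h0 : H.relIndex K ≠ 0) {N : ℕ} (hN : Odd N) (hNK : ∀ x ∈ K, N • x ∈ H) :
    Odd (H.relIndex K) := by
  by_contra h
  have : Finite (K ⧸ H.addSubgroupOf K) := Nat.finite_of_card_ne_zero h0
  obtain ⟨x, hx⟩ := exists_prime_addOrderOf_dvd_card' (G := K ⧸ H.addSubgroupOf K) 2
    (even_iff_two_dvd.1 (Nat.not_odd_iff_even.1 h))
  obtain ⟨y, rfl⟩ := QuotientAddGroup.mk_surjective x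
  refine hN.not_two_dvd_nat (hx ▸ addOrderOf_dvd_iff_nsmul_eq_zero.2 ?_)
  rw [← QuotientAddGroup.mk_nsmul, QuotientAddGroup.eq_zero_iff]
  exact hNK y y.2

end EvenLattice

section FixedSpace

open LinearMap (BilinForm)

theorem isCompl_ker_range_one_sub {K V : Type*} [Field K] [AddCommGroup V] [Module K V]
    [FiniteDimensional K V] {f : Module.End K V} {N : ℕ} (hN : (N : K) ≠ 0) (hfN : f ^ N = 1) :
    IsCompl (LinearMap.ker (1 - f)) (LinearMap.range (1 - f)) := by
  refine (Submodule.isCompl_iff_disjoint _ _ ?_).2 (Submodule.disjoint_def.2 ?_)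
  · rw [add_comm, LinearMap.finrank_range_add_finrank_ker]
  · rintro _ hy ⟨x, rfl⟩
    have hsum := sum_pow_apply_one_sub hfN x
    simp only [pow_apply_eq_of_apply_eq (mem_ker_one_sub.1 hy), Finset.sum_const,
      Finset.card_range, ← Nat.cast_smul_eq_nsmul K] at hsum
    exact (smul_eq_zero_iff_right hN).1 hsum

theorem apply_eq_zero_of_mem_ker_of_mem_range_one_sub {R M T : Type*} [CommRing R] [AddCommGroup M]
    [Module R M] [AddCommGroup T] [Module R T] {b : M →ₗ[R] M →ₗ[R] T} {f : Module.End R M}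
    (hf : ∀ x y, b (f x) (f y) = b x y) {x y : M} (hx : x ∈ LinearMap.ker (1 - f))
    (hy : y ∈ LinearMap.range (1 - f)) : b x y = 0 := by
  obtain ⟨z, rfl⟩ := hy
  have h := hf x z
  rw [mem_ker_one_sub.1 hx] at h
  simp [h]

variable {V : Type*} [AddCommGroup V] [Module ℚ V] {B : BilinForm ℚ V} {f : Module.End ℚ V} {N : ℕ}
  {L : Submodule ℤ V}

theorem exists_isSquare_gramDet_mul_gramDet_ker_one_sub [FiniteDimensional ℚ V] {ι κ : Type*}
    [Fintype ι] [DecidableEq ι] [Fintype κ] [DecidableEq κ] (hs : B.IsSymm)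
    (hfB : ∀ x y, B (f x) (f y) = B x y) (hN : Odd N) (hfN : f ^ N = 1)
    (a : Module.Basis ι ℚ V) (b : Module.Basis κ ℚ (LinearMap.ker (1 - f))) :
    ∃ D : ℕ, Odd D ∧ Module.finrank ℚ (LinearMap.range (1 - f)) + 1 ≡ D [MOD 4] ∧
      IsSquare (gramDet B a * (gramDet (B.restrict _) b * D)) := by
  have hcompl := isCompl_ker_range_one_sub (Nat.cast_ne_zero.2 hN.pos.ne') hfN
  let M := LinearMap.range (1 - f)
  let g : Module.End ℚ M := f.restrict fun x ⟨z, hz⟩ => ⟨f z, by rw [← hz]; simp⟩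
  have hgN : g ^ N = 1 := by
    rw [Module.End.pow_restrict]
    ext x
    simp [hfN]
  have hdet : LinearMap.det (1 - g) ≠ 0 := by
    intro h
    obtain ⟨x, hx, hx0⟩ := Submodule.exists_mem_ne_zero_of_ne_bot
      (LinearMap.bot_lt_ker_of_det_eq_zero h).ne'
    refine hx0 (Subtype.ext (Submodule.disjoint_def.1 hcompl.disjoint x ?_ x.2))
    exact mem_ker_one_sub.2 (congrArg Subtype.val (mem_ker_one_sub.1 hx))
  obtain ⟨D, hD, hgD, hmod⟩ := exists_det_one_sub_eq hN hgN hdet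
  let c := Module.finBasis ℚ M
  have hM : IsSquare (gramDet (B.restrict M) c * D) := hgD ▸
    isSquare_gramDet_mul_det_one_sub (hs.restrict M) (fun x y => hfB x y) hN hgN c
  obtain ⟨s, -, h⟩ := exists_gramDet_eq_sq_mul_of_isCompl B hcompl
    (fun x hx y hy => apply_eq_zero_of_mem_ker_of_mem_range_one_sub hfB hx hy) a b c
  refine ⟨D, hD, hmod, ?_⟩
  have hrearrange : gramDet B a * (gramDet (B.restrict _) b * D) =
      (s * gramDet (B.restrict _) b) ^ 2 * (gramDet (B.restrict M) c * D) := by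
    rw [h]
    ring
  exact hrearrange ▸ (IsSquare.sq _).mul hM

theorem smul_mem_dualSubmodule_of_fixed {R S M : Type*} [CommRing R] [Field S] [AddCommGroup M]
    [Algebra R S] [Module R M] [Module S M] [IsScalarTower R S M] {B : BilinForm S M}
    {L : Submodule R M} {f : Module.End S M} {N : ℕ} (hfL : ∀ x ∈ L, f x ∈ L)
    (hfB : ∀ x y, B (f x) (f y) = B x y) (hfN : f ^ N = 1) {y : M} (hy : f y = y)
    (hint : ∀ x ∈ L, f x = x → B y x ∈ (1 : Submodule R S)) : N • y ∈ B.dualSubmodule L := by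
  intro x hx
  have hfixed : f (∑ i ∈ Finset.range N, (f ^ i) x) = ∑ i ∈ Finset.range N, (f ^ i) x := by
    rw [← mem_ker_one_sub, LinearMap.mem_ker, map_sum, ← sum_pow_apply_one_sub hfN x]
    refine Finset.sum_congr rfl fun i _ => ?_
    simp only [← Module.End.mul_apply]
    rw [((Commute.one_left _).sub_left (Commute.self_pow f i)).eq]
  have hsum : B (N • y) x = B y (∑ i ∈ Finset.range N, (f ^ i) x) := by
    have hB (i : ℕ) : B y ((f ^ i) x) = B y x := by
      rw [← isometry_pow hfB i y x, pow_apply_eq_of_apply_eq hy]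
    simp [hB]
  exact hsum ▸ hint _ (sum_mem fun i _ => pow_apply_mem hfL hx i) hfixed

/-- The fixed vectors of `f` in the lattice `L`, as a lattice in the space of all fixed vectors
of `f`. -/
abbrev fixedLattice (L : Submodule ℤ V) (f : Module.End ℚ V) :
    Submodule ℤ (LinearMap.ker (1 - f)) :=
  L.comap ((LinearMap.ker (1 - f)).subtype.restrictScalars ℤ)

theorem odd_relIndex_dualSubmodule_fixedLattice [L.IsLattice ℚ]
    (hB : (B.restrict (LinearMap.ker (1 - f))).Nondegenerate) (hL : L ≤ B.dualSubmodule L)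
    (hfL : ∀ x ∈ L, f x ∈ L) (hfB : ∀ x y, B (f x) (f y) = B x y) (hN : Odd N) (hfN : f ^ N = 1)
    (hfix : ∀ y ∈ B.dualSubmodule L, f y - y ∈ L → y ∈ L) :
    Odd ((fixedLattice L f).toAddSubgroup.relIndex
      ((B.restrict _).dualSubmodule (fixedLattice L f)).toAddSubgroup) := by
  have hint : fixedLattice L f ≤ (B.restrict _).dualSubmodule (fixedLattice L f) :=
    fun x hx y hy => hL hx y hy
  refine odd_relIndex_of_smul_mem (relIndex_dualSubmodule_ne_zero hB hint) hN fun y hy => ?_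
  have hfy := mem_ker_one_sub.1 y.2
  have hNy := smul_mem_dualSubmodule_of_fixed hfL hfB hfN hfy fun x hx hfx =>
    hy ⟨x, mem_ker_one_sub.2 hfx⟩ hx
  exact hfix _ hNy (by simp [hfy])

theorem isSquare_gramDet_of_fixed_point_free {ι : Type*} [Fintype ι] [DecidableEq ι]
    (hs : B.IsSymm) (hpos : ∀ x, x ≠ 0 → 0 < B x x) [L.IsLattice ℚ] (hL : L ≤ B.dualSubmodule L)
    (hfL : ∀ x ∈ L, f x ∈ L) (hfB : ∀ x y, B (f x) (f y) = B x y) (hN : Odd N) (hfN : f ^ N = 1)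
    (hfix : ∀ y ∈ B.dualSubmodule L, f y - y ∈ L → y ∈ L) (a : Module.Basis ι ℚ V) :
    IsSquare (gramDet B a) := by
  have hB := nondegenerate_of_pos hpos
  have hindex := isSquare_relIndex_dualSubmodule hB hs hL hfL hfB hN hfN hfix
  obtain ⟨b, rfl⟩ := exists_span_range_basis_eq L
  obtain ⟨s, -, hab⟩ := exists_gramDet_eq_sq_mul B a b
  rw [hab, ← abs_of_pos (gramDet_pos hs hpos b), ← relIndex_dualSubmodule_eq_abs_gramDet hB b hL]
  exact (IsSquare.sq s).mul (hindex.map (Nat.castRingHom ℚ))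

theorem four_dvd_add_of_isSquare_mul {a h D : ℕ} {m : ℤ} (hm_odd : Odd m)
    (hm : m ≡ 1 - a [ZMOD 4]) (hD_odd : Odd D) (hD : h + 1 ≡ D [MOD 4]) (hmD : IsSquare (m * D)) :
    4 ∣ a + h := by
  have hone := modEq_one_of_isSquare_of_odd hmD (hm_odd.mul (by exact_mod_cast hD_odd))
  have hD' : (h + 1 : ℤ) ≡ D [ZMOD 4] := by exact_mod_cast Int.natCast_modEq_iff.2 hD
  have hah : (1 - a) * (h + 1 : ℤ) ≡ 1 [ZMOD 4] := (hm.symm.mul hD').trans hone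
  obtain ⟨u, rfl⟩ : Even a := by
    obtain ⟨p, hp⟩ := hm.dvd
    obtain ⟨q, rfl⟩ := hm_odd
    exact ⟨a / 2, by omega⟩
  obtain ⟨v, rfl⟩ : Even h := by
    obtain ⟨q, rfl⟩ := hD_odd
    exact ⟨h / 2, by unfold Nat.ModEq at hD; omega⟩
  obtain ⟨p, hp⟩ := hah.dvd
  have hsum : ((u + u + (v + v) : ℕ) : ℤ) = 4 * (p - u * v + v) := by
    push_cast at hp ⊢
    linear_combination hp
  exact_mod_cast Dvd.intro _ hsum.symm

end FixedSpace

theorem rank_div_four_of_fixed_point_free_general {V : Type*} [AddCommGroup V] [Module ℚ V]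
    {B : LinearMap.BilinForm ℚ V} (hs : B.IsSymm) (hpos : ∀ x, x ≠ 0 → 0 < B x x)
    {L : Submodule ℤ V} [L.IsLattice ℚ] (hL : IsEvenLattice B L) {f : Module.End ℚ V}
    (hfL : ∀ x ∈ L, f x ∈ L) (hfB : ∀ x y, B (f x) (f y) = B x y) {N : ℕ} (hN : Odd N)
    (hfN : f ^ N = 1) (hfix : ∀ y ∈ B.dualSubmodule L, f y - y ∈ L → y ∈ L) :
    4 ∣ Module.finrank ℚ V := by
  have hint := hL.le_dualSubmodule hs
  obtain ⟨a, -⟩ := exists_span_range_basis_eq L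
  have : FiniteDimensional ℚ V := a.finiteDimensional_of_finite
  let F := LinearMap.ker (1 - f)
  have hB : (B.restrict F).Nondegenerate := nondegenerate_of_pos fun x hx => hpos x (by simpa)
  have hF : IsEvenLattice (B.restrict F) (fixedLattice L f) := fun x hx => hL x hx
  obtain ⟨c, m, hcm, hm_odd, hm⟩ := hF.exists_gramDet_eq_odd (hs.restrict F) hB
    (odd_relIndex_dualSubmodule_fixedLattice hB hint hfL hfB hN hfN hfix)
  obtain ⟨D, hD_odd, hD, hsq⟩ :=
    exists_isSquare_gramDet_mul_gramDet_ker_one_sub hs hfB hN hfN a c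
  have ha := isSquare_gramDet_of_fixed_point_free hs hpos hint hfL hfB hN hfN hfix a
  have hmD : IsSquare (m * D) := by
    have hdiv := hsq.div ha
    rw [hcm, mul_div_cancel_left₀ _ (gramDet_pos hs hpos a).ne'] at hdiv
    exact Rat.isSquare_intCast_iff.1 (by exact_mod_cast hdiv)
  rw [← LinearMap.finrank_range_add_finrank_ker (1 - f), add_comm]
  exact four_dvd_add_of_isSquare_mul hm_odd hm hD_odd hD hmD

theorem dualLattice_eq_dualSubmodule (V : Type) [AddCommGroup V] [Module ℚ V]
    (B : LinearMap.BilinForm ℚ V) (L : Submodule ℤ V) : dualLattice V B L = B.dualSubmodule L := by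
  ext y
  simp only [LinearMap.BilinForm.mem_dualSubmodule, Submodule.mem_one, eq_intCast]
  exact forall₂_congr fun _ _ => exists_congr fun _ => eq_comm

/-- If an even lattice `L` of rank `2k` has an automorphism of `ℓ`-power
order (`ℓ ≥ 5` prime) whose only fixed point on the discriminant group `L*/L` is `0`,
then `k` is even, i.e. the rank of `L` is divisible by `4`. -/
theorem rank_div_four_of_fixed_point_free
    (ℓ : ℕ) (hℓ : ℓ.Prime) (hℓ5 : 5 ≤ ℓ)
    (V : Type) [AddCommGroup V] [Module ℚ V] [FiniteDimensional ℚ V]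
    (B : V →ₗ[ℚ] V →ₗ[ℚ] ℚ)
    (hsymm : ∀ x y : V, B x y = B y x)
    (hpos : ∀ x : V, x ≠ 0 → 0 < B x x)
    (k : ℕ) (hrank : Module.finrank ℚ V = 2 * k)
    (L : Submodule ℤ V) (hspan : Submodule.span ℚ (L : Set V) = ⊤) (hfg : L.FG)
    (hint : ∀ x ∈ L, ∀ y ∈ L, ∃ m : ℤ, B x y = (m : ℚ))
    (heven : ∀ x ∈ L, ∃ m : ℤ, B x x = 2 * (m : ℚ))
    (σ : V ≃ₗ[ℚ] V)
    (hσL : Submodule.map (LinearMap.restrictScalars ℤ (σ : V →ₗ[ℚ] V)) L = L)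
    (hσB : ∀ x y : V, B (σ x) (σ y) = B x y)
    (n : ℕ) (hord : orderOf σ = ℓ ^ n)
    (hfix : ∀ y ∈ dualLattice V B L, σ y - y ∈ L → y ∈ L) :
    Even k := by
  have : L.IsLattice ℚ := ⟨hfg, hspan⟩
  have hσN : (σ : V →ₗ[ℚ] V) ^ ℓ ^ n = 1 := by
    change LinearEquiv.automorphismGroup.toLinearMapMonoidHom σ ^ ℓ ^ n = 1
    rw [← map_pow, ← hord, pow_orderOf_eq_one, map_one]
  have hdvd : 4 ∣ Module.finrank ℚ V :=
    rank_div_four_of_fixed_point_free_general ⟨hsymm⟩ hpos heven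
      (fun x hx => hσL.le (Submodule.mem_map_of_mem hx)) hσB
      ((hℓ.odd_of_ne_two (by omega)).pow (n := n)) hσN
      (fun y hy => hfix y (dualLattice_eq_dualSubmodule V B L ▸ hy))
  exact even_iff_two_dvd.2 (by omega)
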